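/- Strong incompatibility of external and Stackelberg regret: with the expected-loss matrix L : {h, h'} × {h, h'} → ℝ given by L(h, h) = 1/5, L(h, h') = 9/10, L(h', h) = 1/20, L(h', h') = 1/4, for every horizon T ≥ 1 and every action sequence a_1, …, a_T ∈ {h, h'}, the maximum of the external regret R(T) = ∑_{t=1}^T L(a_t, a_t) − min_{c} ∑_{t=1}^T L(c, a_t) and the Stackelberg regret 𝓡(T) = ∑_{t=1}^T L(a_t, a_t) − min_c T·L(c, c) satisfies max(R(T), 𝓡(T)) ≥ (3/80)·T. In particular, no action sequence can make both regrets sublinear in T. -/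

import Mathlib

/-!
Fix a comparator `c` for external regret and a comparator `d` for Stackelberg regret. If every
action `b` satisfies `p * L c b + q * L d d + γ ≤ L b b` for convex weights `p, q`, then summing
along the play shows that `p` times the external regret plus `q` times the Stackelberg regret is at
least `γ` per round, and the larger regret dominates this average. In the strategic-classification
instance take `c = h'`, `d = h` and `p = 1 / 4`, the weight that makes `L b b - p * L h' b` equal to
`3 / 16` for both actions `b`; this leaves `γ = 3 / 16 - (3 / 4) * (1 / 5) = 3 / 80`.
-/

open Set

section Regret

variable {A ι : Type*} [Fintype ι]

/-- The cumulative loss of the play `a` when, in every round, the agents best-respond to the action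
actually played: `L b b'` is the loss of action `b` against agents responding to `b'`. -/
def realizedLoss (L : A → A → ℝ) (a : ι → A) : ℝ :=
  ∑ t, L (a t) (a t)

/-- External regret: the benchmark is the best fixed action against the realized responses. The
infimum is `0` by convention if the losses of fixed actions are unbounded below. -/
noncomputable def externalRegret (L : A → A → ℝ) (a : ι → A) : ℝ :=
  realizedLoss L a - ⨅ c, ∑ t, L c (a t)

/-- Stackelberg regret: the benchmark is the best fixed action had the agents best-responded to it.
The infimum is `0` by convention if the losses of fixed actions are unbounded below. -/
noncomputable def stackelbergRegret (L : A → A → ℝ) (a : ι → A) : ℝ :=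
  realizedLoss L a - ⨅ c, (Fintype.card ι : ℝ) * L c c

variable {L : A → A → ℝ} {a : ι → A}

theorem realizedLoss_sub_le_externalRegret (hbdd : BddBelow (range fun c ↦ ∑ t, L c (a t)))
    (c : A) : realizedLoss L a - ∑ t, L c (a t) ≤ externalRegret L a :=
  sub_le_sub_left (ciInf_le hbdd c) _

theorem realizedLoss_sub_le_stackelbergRegret (hbdd : BddBelow (range fun c ↦ L c c)) (d : A) :
    realizedLoss L a - Fintype.card ι * L d d ≤ stackelbergRegret L a := by
  have hbdd_card : BddBelow (range fun c ↦ (Fintype.card ι : ℝ) * L c c) := by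
    simpa only [← range_comp, Function.comp_def] using
      (monotone_mul_left_of_nonneg (Nat.cast_nonneg (α := ℝ) (Fintype.card ι))).map_bddBelow hbdd
  exact sub_le_sub_left (ciInf_le hbdd_card d) _

theorem mul_sum_add_le_realizedLoss {p r : ℝ} {c : A}
    (hL : ∀ b, p * L c b + r ≤ L b b) (a : ι → A) :
    p * ∑ t, L c (a t) + Fintype.card ι * r ≤ realizedLoss L a :=
  calc p * ∑ t, L c (a t) + Fintype.card ι * r
      = ∑ t, (p * L c (a t) + r) := by
        rw [Finset.sum_add_distrib, ← Finset.mul_sum, Finset.sum_const, Finset.card_univ,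
          nsmul_eq_mul]
    _ ≤ realizedLoss L a := Finset.sum_le_sum fun t _ ↦ hL (a t)

theorem mul_card_le_convex_combo_regret
    (hext : BddBelow (range fun c ↦ ∑ t, L c (a t))) (hstack : BddBelow (range fun c ↦ L c c))
    {p q γ : ℝ} (hp : 0 ≤ p) (hq : 0 ≤ q) (hpq : p + q = 1) {c d : A}
    (hL : ∀ b, p * L c b + (q * L d d + γ) ≤ L b b) :
    γ * Fintype.card ι ≤ p * externalRegret L a + q * stackelbergRegret L a :=
  calc γ * Fintype.card ι
      ≤ realizedLoss L a - p * ∑ t, L c (a t) - q * (Fintype.card ι * L d d) := by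
        linarith [mul_sum_add_le_realizedLoss hL a]
    _ = p * (realizedLoss L a - ∑ t, L c (a t)) +
          q * (realizedLoss L a - Fintype.card ι * L d d) := by
        linear_combination (-realizedLoss L a) * hpq
    _ ≤ p * externalRegret L a + q * stackelbergRegret L a := by
        gcongr
        · exact realizedLoss_sub_le_externalRegret hext c
        · exact realizedLoss_sub_le_stackelbergRegret hstack d

theorem strong_incompatibility_external_stackelberg_general
    (hext : BddBelow (range fun c ↦ ∑ t, L c (a t))) (hstack : BddBelow (range fun c ↦ L c c))
    {p q γ : ℝ} (hp : 0 ≤ p) (hq : 0 ≤ q) (hpq : p + q = 1) {c d : A}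
    (hL : ∀ b, p * L c b + (q * L d d + γ) ≤ L b b) :
    γ * Fintype.card ι ≤ max (externalRegret L a) (stackelbergRegret L a) :=
  (mul_card_le_convex_combo_regret hext hstack hp hq hpq hL).trans
    (Convex.combo_le_max _ _ hp hq hpq)

end Regret

theorem ciInf_bool {α : Type*} [ConditionallyCompleteLattice α] (f : Bool → α) :
    ⨅ b, f b = f false ⊓ f true := by
  rw [iInf, Bool.range_eq, csInf_pair]


/-- Strong incompatibility of external and Stackelberg regret: in the expected-loss
instance of Theorem 3.1 (actions `h, h'` encoded as `false, true : Bool`), for every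
horizon `T ≥ 1` and every action sequence, the maximum of the external regret and the
Stackelberg regret is at least `(3/80)·T`; in particular no action sequence can make
both regrets sublinear in `T`. -/
theorem strong_incompatibility_external_stackelberg
    (L : Bool → Bool → ℝ)
    (hhh : L false false = 1 / 5) (hhh' : L false true = 9 / 10)
    (hh'h : L true false = 1 / 20) (hh'h' : L true true = 1 / 4)
    (T : ℕ) (hT : 1 ≤ T) (a : Fin T → Bool) :
    max ((∑ t, L (a t) (a t)) - min (∑ t, L false (a t)) (∑ t, L true (a t)))
        ((∑ t, L (a t) (a t)) - min ((T : ℝ) * L false false) ((T : ℝ) * L true true))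
      ≥ (3 / 80) * T := by
  have hL : ∀ b, 1 / 4 * L true b + (3 / 4 * L false false + 3 / 80) ≤ L b b := by
    rintro (_ | _)
    · norm_num [hhh, hh'h]
    · norm_num [hhh, hh'h']
  have hregret := strong_incompatibility_external_stackelberg_general (a := a)
    (finite_range _).bddBelow (finite_range _).bddBelow
    (by norm_num) (by norm_num) (by norm_num) hL
  simpa only [externalRegret, stackelbergRegret, realizedLoss, ciInf_bool, Fintype.card_fin]
    using hregret
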